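/- arXiv:2603.18162 — 2 statements merged into one kernel-verified Lean document; each statement's English description precedes it below -/
import Mathlib

section
/- Let d ≥ 1 and D ≥ 2 be integers and let A ⊆ ℕ^d be of smooth type for D. Then sA = Δ_s for every natural number s ≥ d(D−2). -/
open Pointwise

/-- The `s`-fold sumset of `A`: `0A = {0}` and `(s+1)A = A + sA`. -/
def sumset {M : Type*} [AddMonoid M] (A : Set M) : ℕ → Set M
  | 0 => {0}
  | s + 1 => A + sumset A s

/-- `A ⊆ ℕ^d` is of smooth type for `D`. -/
def SmoothType (d D : ℕ) (A : Set (Fin d → ℕ)) : Prop :=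
  (∀ a ∈ A, ∑ j, a j ≤ D) ∧
  (0 : Fin d → ℕ) ∈ A ∧
  (∀ i : Fin d, Pi.single i 1 ∈ A) ∧
  (∀ i : Fin d, Pi.single i (D - 1) ∈ A) ∧
  (∀ i j : Fin d, Pi.single i 1 + Pi.single j (D - 1) ∈ A)

/-!
Write `T n` for the set of `y` with `|y| ≤ n` and `k T n` for its dilate by `k = D - 1`. The
smooth-type condition says precisely that `T 1 + k T 1 ⊆ A ⊆ T D`. Since `T n` has `s`-fold sumset
`T (s * n)`, it follows that `T s + k T s ⊆ sA ⊆ T (s * D)`. The two bounds agree once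
`s ≥ d * (k - 1)`: dividing the coordinates of `y` by `k` leaves a remainder of size at most
`d * (k - 1)`, and if the quotient is too large for `T s`, it can be shrunk to size exactly `s`.
-/

theorem sumset_mono {M : Type*} [AddMonoid M] {A B : Set M} (h : A ⊆ B) (s : ℕ) :
    sumset A s ⊆ sumset B s := by
  induction s with
  | zero => exact subset_rfl
  | succ s ih => exact Set.add_subset_add h ih

theorem sumset_add {M : Type*} [AddCommMonoid M] (A B : Set M) (s : ℕ) :
    sumset (A + B) s = sumset A s + sumset B s := by
  induction s with
  | zero => simp [sumset]
  | succ s ih => simp only [sumset, ih, add_add_add_comm]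

theorem sumset_image {M N : Type*} [AddMonoid M] [AddMonoid N] (f : M →+ N) (A : Set M) (s : ℕ) :
    sumset (f '' A) s = f '' sumset A s := by
  induction s with
  | zero => simp [sumset]
  | succ s ih => simp only [sumset, ih, Set.image_add]

section LatticeSimplex

variable {ι : Type*} [Fintype ι]

variable (ι) in
/-- The lattice points of the corner simplex of size `n` in `ℕ^ι`; the set `Δ_s` of the theorem is
`latticeSimplex (Fin d) (s * D)`. -/
def latticeSimplex (n : ℕ) : Set (ι → ℕ) :=
  {y | ∑ j, y j ≤ n}

theorem exists_le_sum_eq (y : ι → ℕ) {n : ℕ} (hn : n ≤ ∑ j, y j) :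
    ∃ v ≤ y, ∑ j, v j = n := by
  obtain ⟨v, hv, hvn⟩ := Finsupp.exists_le_degree_eq (Finsupp.equivFunOnFinite.symm y) n
    (by simpa [Finsupp.degree_eq_sum] using hn)
  exact ⟨v, hv, by rw [← hvn, Finsupp.degree_eq_sum]⟩

theorem sum_le_mul_sum_div_add {k : ℕ} (hk : 0 < k) (y : ι → ℕ) :
    ∑ j, y j ≤ k * ∑ j, y j / k + Fintype.card ι * (k - 1) :=
  calc ∑ j, y j = k * ∑ j, y j / k + ∑ j, y j % k := by
        simp only [Finset.mul_sum, ← Finset.sum_add_distrib, Nat.div_add_mod]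
    _ ≤ k * ∑ j, y j / k + Fintype.card ι * (k - 1) := by
        gcongr
        exact Finset.sum_le_card_nsmul _ _ _ fun j _ ↦ Nat.le_sub_one_of_lt (Nat.mod_lt _ hk)

theorem sub_mem_latticeSimplex_iff {y v : ι → ℕ} (hvy : v ≤ y) {m : ℕ} :
    y - v ∈ latticeSimplex ι m ↔ ∑ j, y j ≤ m + ∑ j, v j := by
  rw [← tsub_le_iff_right, ← Finset.sum_tsub_distrib _ fun j _ ↦ hvy j]
  rfl

theorem latticeSimplex_zero : latticeSimplex ι 0 = {0} := by
  ext y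
  simp [latticeSimplex, funext_iff]

theorem latticeSimplex_one [DecidableEq ι] :
    latticeSimplex ι 1 = insert 0 (Set.range fun i ↦ Pi.single i 1) := by
  ext y
  have sum_eq_one : ∑ j, y j = 1 ↔ ∃ i, Pi.single i 1 = y := by
    simpa [Finsupp.sum_fintype, ← Finsupp.equivFunOnFinite_symm_single, eq_comm] using
      Finsupp.sum_eq_one_iff (Finsupp.equivFunOnFinite.symm y)
  have sum_eq_zero : ∑ j, y j = 0 ↔ y = 0 := by simp [funext_iff]
  rw [latticeSimplex, Set.mem_ofPred_eq, Nat.le_one_iff_eq_zero_or_eq_one, sum_eq_zero, sum_eq_one,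
    Set.mem_insert_iff, Set.mem_range]

theorem latticeSimplex_add (m n : ℕ) :
    latticeSimplex ι (m + n) = latticeSimplex ι m + latticeSimplex ι n := by
  apply Set.Subset.antisymm
  · intro y (hy : ∑ j, y j ≤ m + n)
    obtain ⟨v, hvy, hv⟩ := exists_le_sum_eq y (min_le_right n (∑ j, y j))
    refine ⟨y - v, ?_, v, hv.trans_le (min_le_left _ _), tsub_add_cancel_of_le hvy⟩
    rw [sub_mem_latticeSimplex_iff hvy]
    omega
  · rintro _ ⟨u, hu, v, hv, rfl⟩
    simpa [latticeSimplex, Finset.sum_add_distrib] using add_le_add hu hv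

theorem sumset_latticeSimplex (n s : ℕ) :
    sumset (latticeSimplex ι n) s = latticeSimplex ι (s * n) := by
  induction s with
  | zero => rw [zero_mul, latticeSimplex_zero, sumset]
  | succ s ih => rw [sumset, ih, ← latticeSimplex_add, add_one_mul, add_comm]

theorem latticeSimplex_add_mul_subset {k m : ℕ} (hk : 0 < k) (hm : Fintype.card ι * (k - 1) ≤ m)
    (n : ℕ) :
    latticeSimplex ι (m + k * n) ⊆
      latticeSimplex ι m + nsmulAddMonoidHom k '' latticeSimplex ι n := by
  intro y (hy : ∑ j, y j ≤ m + k * n)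
  obtain ⟨v, hv_le, hv⟩ := exists_le_sum_eq (fun j ↦ y j / k) (min_le_right n (∑ j, y j / k))
  have hvy : k • v ≤ y := fun j ↦ (Nat.mul_le_mul_left k (hv_le j)).trans (Nat.mul_div_le (y j) k)
  refine ⟨y - k • v, ?_, k • v, ⟨v, hv.trans_le (min_le_left _ _), rfl⟩, tsub_add_cancel_of_le hvy⟩
  have sum_nsmul : ∑ j, (k • v) j = k * ∑ j, v j := (Finset.mul_sum _ _ _).symm
  rw [sub_mem_latticeSimplex_iff hvy, sum_nsmul, hv]
  rcases min_choice n (∑ j, y j / k) with hmin | hmin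
  · rwa [hmin]
  · rw [hmin, add_comm m]
    exact (sum_le_mul_sum_div_add hk y).trans (by gcongr)

end LatticeSimplex

theorem SmoothType.add_image_nsmul_subset {d D : ℕ} {A : Set (Fin d → ℕ)}
    (hA : SmoothType d D A) :
    latticeSimplex (Fin d) 1 + nsmulAddMonoidHom (D - 1) '' latticeSimplex (Fin d) 1 ⊆ A := by
  obtain ⟨-, zero_mem, single_mem, single_sub_one_mem, add_mem⟩ := hA
  have nsmul_single (j : Fin d) :
      (D - 1) • (Pi.single j 1 : Fin d → ℕ) = Pi.single j (D - 1) := by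
    rw [← Pi.single_smul, smul_eq_mul, mul_one]
  rw [latticeSimplex_one]
  rintro _ ⟨_, rfl | ⟨i, rfl⟩, _, ⟨_, rfl | ⟨j, rfl⟩, rfl⟩, rfl⟩
  · simpa using zero_mem
  · simpa [nsmul_single] using single_sub_one_mem j
  · simpa using single_mem i
  · simpa [nsmul_single] using add_mem i j

theorem stmt_4_general {ι : Type*} [Fintype ι] {k s : ℕ} (hk : 0 < k) {A : Set (ι → ℕ)}
    (hA_le : A ⊆ latticeSimplex ι (k + 1))
    (hA_ge : latticeSimplex ι 1 + nsmulAddMonoidHom k '' latticeSimplex ι 1 ⊆ A)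
    (hs : Fintype.card ι * (k - 1) ≤ s) :
    sumset A s = latticeSimplex ι (s * (k + 1)) := by
  apply Set.Subset.antisymm
  · calc sumset A s ⊆ sumset (latticeSimplex ι (k + 1)) s := sumset_mono hA_le s
      _ = latticeSimplex ι (s * (k + 1)) := sumset_latticeSimplex _ _
  · have sumset_one : sumset (latticeSimplex ι 1) s = latticeSimplex ι s := by
      rw [sumset_latticeSimplex, mul_one]
    calc latticeSimplex ι (s * (k + 1)) = latticeSimplex ι (s + k * s) := by ring_nf
      _ ⊆ latticeSimplex ι s + nsmulAddMonoidHom k '' latticeSimplex ι s :=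
        latticeSimplex_add_mul_subset hk hs s
      _ = sumset (latticeSimplex ι 1 + nsmulAddMonoidHom k '' latticeSimplex ι 1) s := by
        rw [sumset_add, sumset_image, sumset_one]
      _ ⊆ sumset A s := sumset_mono hA_ge s

theorem stmt_4 (d D : ℕ) (hd : 1 ≤ d) (hD : 2 ≤ D)
    (A : Set (Fin d → ℕ)) (hA : SmoothType d D A)
    (s : ℕ) (hs : d * (D - 2) ≤ s) :
    sumset A s = {y : Fin d → ℕ | ∑ j, y j ≤ s * D} := by
  obtain ⟨k, rfl⟩ : ∃ k, D = k + 1 := ⟨D - 1, by omega⟩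
  exact stmt_4_general (by omega) hA.1 hA.add_image_nsmul_subset (by simpa using hs)
end

section
/- Let d ≥ 1 and D ≥ 3 be integers and let A ⊆ ℕ^d be of smooth type for D. Then the set {s ∈ ℕ : sA = Δ_s and Δ_s + {0, Dε₁, …, Dε_d} = Δ_{s+1}} is nonempty, and its least element σ(A) satisfies d·(D−1) ≤ D·σ(A) (equivalently d − d/D ≤ σ(A)) and σ(A) ≤ d(D−2). -/
open Pointwise

/-- The discrete simplex `Δ_s = {y ∈ ℕ^d : |y| ≤ sD}`. -/
def Delta (d D s : ℕ) : Set (Fin d → ℕ) := {y | ∑ j, y j ≤ s * D}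

/-- The set `{0, Dε₁, …, Dε_d}`. -/
def Erays (d D : ℕ) : Set (Fin d → ℕ) :=
  insert 0 (Set.range fun i : Fin d => Pi.single i D)

/-!
Let `s ≥ d (D - 2)` and `y ∈ Δ_s`. Writing `y = (D - 1) u + v` with `u = ⌊y / (D - 1)⌋`, the
remainder satisfies `|v| ≤ d (D - 2) ≤ s`; if `|u| > s`, replacing `u` by a smaller vector of size
exactly `s` leaves `|v| ≤ s D - s (D - 1) = s`. So every `y ∈ Δ_s` lies in `(D - 1) · sE + sE` with
`E = {0, ε₁, …, ε_d}`, and `(D - 1) · E + E ⊆ A` when `A` is of smooth type.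

The second condition holds if and only if `d (D - 1) ≤ D s`: a vector of `Δ_{s+1}` outside `Δ_s` can
be reached only by subtracting some `D εᵢ`, which is impossible when all coordinates are at most
`D - 1`, and such vectors exist outside `Δ_s` exactly when `d (D - 1) > D s`.
-/

theorem sumset_eq_nsmul {M : Type*} [AddMonoid M] (A : Set M) (s : ℕ) : sumset A s = s • A := by
  induction s with
  | zero => rw [zero_nsmul]; rfl
  | succ s ih => rw [succ_nsmul', ← ih]; rfl

section NatVectors

variable {ι : Type*} [Fintype ι]

theorem exists_le_sum_eq_s5 (q : ι → ℕ) {k : ℕ} (hk : k ≤ ∑ i, q i) : ∃ u ≤ q, ∑ i, u i = k := by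
  obtain ⟨u, hu, hk⟩ := Finsupp.exists_le_degree_eq (Finsupp.equivFunOnFinite.symm q) k
    (by simpa [Finsupp.degree_eq_sum] using hk)
  exact ⟨u, hu, by rwa [Finsupp.degree_eq_sum] at hk⟩

theorem sum_mod_le {m : ℕ} (hm : 0 < m) (y : ι → ℕ) :
    ∑ i, y i % m ≤ Fintype.card ι * (m - 1) := by
  simpa using Finset.sum_le_card_nsmul Finset.univ (y · % m) (m - 1)
    fun i _ ↦ Nat.le_sub_one_of_lt (Nat.mod_lt (y i) hm)

theorem exists_eq_nsmul_add_of_sum_le {m s : ℕ} (hm : 0 < m)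
    (hs : Fintype.card ι * (m - 1) ≤ s) {y : ι → ℕ} (hy : ∑ i, y i ≤ s * (m + 1)) :
    ∃ u v : ι → ℕ, m • u + v = y ∧ ∑ i, u i ≤ s ∧ ∑ i, v i ≤ s := by
  by_cases hquot : ∑ i, y i / m ≤ s
  · exact ⟨fun i ↦ y i / m, fun i ↦ y i % m, funext fun i ↦ Nat.div_add_mod (y i) m, hquot,
      (sum_mod_le hm y).trans hs⟩
  · obtain ⟨u, hu, hus⟩ := exists_le_sum_eq_s5 (fun i ↦ y i / m) (not_le.1 hquot).le
    have hle : m • u ≤ y := fun i ↦ (Nat.mul_le_mul_left m (hu i)).trans (Nat.mul_div_le (y i) m)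
    obtain ⟨v, rfl⟩ := exists_add_of_le hle
    have hsum : ∑ i, (m • u + v) i = m * s + ∑ i, v i := by
      simp [Finset.sum_add_distrib, ← Finset.mul_sum, hus]
    exact ⟨u, v, rfl, hus.le, by linarith⟩

end NatVectors

section Simplices

variable {d D s : ℕ}

theorem mem_Delta {y : Fin d → ℕ} : y ∈ Delta d D s ↔ ∑ j, y j ≤ s * D := Iff.rfl

theorem Delta_add_Delta_subset (s t : ℕ) : Delta d D s + Delta d D t ⊆ Delta d D (s + t) := by
  rintro _ ⟨x, hx, y, hy, rfl⟩
  simpa [Delta, Finset.sum_add_distrib, add_mul] using add_le_add hx hy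

theorem nsmul_subset_Delta {A : Set (Fin d → ℕ)} (hA : ∀ a ∈ A, ∑ j, a j ≤ D) (s : ℕ) :
    s • A ⊆ Delta d D s := by
  induction s with
  | zero => simp [Delta]
  | succ s ih =>
    have hA_one : A ⊆ Delta d D 1 := fun a ha ↦ by simpa [Delta] using hA a ha
    rw [succ_nsmul]
    exact (Set.add_subset_add ih hA_one).trans (Delta_add_Delta_subset s 1)

theorem mem_Delta_add_Erays {y : Fin d → ℕ} :
    y ∈ Delta d D s + Erays d D ↔
      ∑ j, y j ≤ s * D ∨ ∑ j, y j ≤ (s + 1) * D ∧ ∃ i, D ≤ y i := by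
  constructor
  · rintro ⟨x, hx, _, rfl | ⟨i, rfl⟩, rfl⟩
    · exact .inl (by simpa [Delta] using hx)
    · exact .inr ⟨by simpa [Delta, Finset.sum_add_distrib, add_mul] using hx, i, by simp⟩
  · rintro (hy | ⟨hy, i, hi⟩)
    · exact ⟨y, hy, 0, .inl rfl, add_zero y⟩
    · have hle : Pi.single i D ≤ y := update_le_iff.2 ⟨hi, fun j _ ↦ Nat.zero_le (y j)⟩
      obtain ⟨x, rfl⟩ := exists_add_of_le hle
      have hsum : ∑ j, (Pi.single i D + x : Fin d → ℕ) j = D + ∑ j, x j := by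
        simp [Finset.sum_add_distrib]
      refine ⟨x, mem_Delta.2 (by linarith), Pi.single i D, .inr ⟨i, rfl⟩, add_comm _ _⟩

theorem Delta_add_Erays_eq_iff :
    Delta d D s + Erays d D = Delta d D (s + 1) ↔ d * (D - 1) ≤ D * s := by
  constructor
  · intro h
    by_contra! hlt
    obtain ⟨y, hy, hsum⟩ := exists_le_sum_eq_s5 (fun _ : Fin d ↦ D - 1) (k := D * s + 1)
      (by simpa using hlt)
    have hD : 0 < D - 1 := Nat.pos_of_mul_pos_left (Nat.zero_lt_of_lt hlt)
    have hmem : y ∈ Delta d D (s + 1) := by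
      rw [mem_Delta, hsum]
      linarith [Nat.sub_le D 1]
    rw [← h, mem_Delta_add_Erays] at hmem
    rcases hmem with hle | ⟨-, i, hi⟩
    · linarith
    · have : y i ≤ D - 1 := hy i
      omega
  · intro h
    ext y
    rw [mem_Delta_add_Erays]
    refine ⟨fun hy ↦ hy.elim (fun hle ↦ ?_) And.left, fun hy ↦ ?_⟩
    · exact hle.trans (Nat.mul_le_mul_right D s.le_succ)
    · by_cases hbig : ∃ i, D ≤ y i
      · exact .inr ⟨hy, hbig⟩
      · push Not at hbig
        left
        calc ∑ j, y j ≤ d * (D - 1) := by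
              simpa using Finset.sum_le_card_nsmul Finset.univ y (D - 1)
                fun j _ ↦ Nat.le_sub_one_of_lt (hbig j)
          _ ≤ s * D := h.trans_eq (mul_comm D s)

theorem nsmul_Erays_one (d s : ℕ) : s • Erays d 1 = Delta d 1 s := by
  induction s with
  | zero =>
    ext y
    simp [Delta, funext_iff]
  | succ s ih => rw [succ_nsmul, ih, Delta_add_Erays_eq_iff]; simp

theorem Delta_subset_image_nsmul_add (hD : 2 ≤ D) (hs : d * (D - 2) ≤ s) :
    Delta d D s ⊆ nsmulAddMonoidHom (D - 1) '' Delta d 1 s + Delta d 1 s := by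
  intro y hy
  obtain ⟨m, rfl⟩ : ∃ m, D = m + 1 := ⟨D - 1, by omega⟩
  obtain ⟨u, v, rfl, hu, hv⟩ :=
    exists_eq_nsmul_add_of_sum_le (m := m) (by omega) (by simpa using hs) hy
  exact Set.add_mem_add (Set.mem_image_of_mem _ (by simpa [Delta] using hu))
    (by simpa [Delta] using hv)

end Simplices

namespace SmoothType

variable {d D s : ℕ} {A : Set (Fin d → ℕ)}

theorem image_nsmul_Erays_add_subset (hA : SmoothType d D A) :
    nsmulAddMonoidHom (D - 1) '' Erays d 1 + Erays d 1 ⊆ A := by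
  obtain ⟨-, zero_mem, single_mem, single_pred_mem, single_add_mem⟩ := hA
  have nsmul_single (i : Fin d) :
      (D - 1) • (Pi.single i 1 : Fin d → ℕ) = Pi.single i (D - 1) := by
    simp [← Pi.single_smul]
  rintro _ ⟨_, ⟨_, rfl | ⟨i, rfl⟩, rfl⟩, _, rfl | ⟨j, rfl⟩, rfl⟩
  · simpa using zero_mem
  · simpa using single_mem j
  · simpa [nsmul_single] using single_pred_mem i
  · simpa [nsmul_single, add_comm] using single_add_mem j i

theorem nsmul_eq_Delta (hA : SmoothType d D A) (hD : 2 ≤ D) (hs : d * (D - 2) ≤ s) :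
    s • A = Delta d D s := by
  refine (nsmul_subset_Delta hA.1 s).antisymm ?_
  calc Delta d D s
      ⊆ nsmulAddMonoidHom (D - 1) '' Delta d 1 s + Delta d 1 s :=
        Delta_subset_image_nsmul_add hD hs
    _ = s • (nsmulAddMonoidHom (D - 1) '' Erays d 1 + Erays d 1) := by
        rw [← nsmul_Erays_one, Set.image_nsmul, nsmul_add]
    _ ⊆ s • A := Set.nsmul_subset_nsmul_left hA.image_nsmul_Erays_add_subset

end SmoothType

theorem stmt_5 (d D : ℕ) (hd : 1 ≤ d) (hD : 3 ≤ D)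
    (A : Set (Fin d → ℕ)) (hA : SmoothType d D A) :
    ∃ σ : ℕ,
      IsLeast {s : ℕ | sumset A s = Delta d D s ∧
        Delta d D s + Erays d D = Delta d D (s + 1)} σ ∧
      d * (D - 1) ≤ D * σ ∧ σ ≤ d * (D - 2) := by
  simp only [sumset_eq_nsmul, Delta_add_Erays_eq_iff]
  have hcoeff : D - 1 ≤ D * (D - 2) :=
    calc D - 1 ≤ D * 1 := by omega
      _ ≤ D * (D - 2) := Nat.mul_le_mul_left D (by omega)
  have hupper : d * (D - 2) ∈ {s | s • A = Delta d D s ∧ d * (D - 1) ≤ D * s} :=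
    ⟨hA.nsmul_eq_Delta (by omega) le_rfl, by
      simpa only [mul_left_comm] using Nat.mul_le_mul_left d hcoeff⟩
  have hleast := isLeast_csInf ⟨_, hupper⟩
  exact ⟨_, hleast, hleast.1.2, hleast.2 hupper⟩
end
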